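/- Let n ≥ 1, a ∈ {0,1}^{n-1}, and P_a the digital net as above, with Δ its discrepancy function. Then the L_1 discrepancy of P_a satisfies L_1(P_a) ≥ (h+5)/2^{n+3}, where h = #{i : a_i = 0}. In particular L_1(P_a) ≥ h/2^{n+3}. -/

import Mathlib

/-!
The proof uses `∫ |Δ| ≥ ∫ Δ` and evaluates `∫ Δ` exactly.  Integrating the indicator of each
box gives `∫ Δ = 2⁻ⁿ ∑ (1 - x) (1 - y) - 1 / 4`, the sum being over the points `(x, y)` of the net
(`integral_discrepancy`).

The sum over the points is evaluated with the character `sgn = (-1)^·` of `ZMod 2`.  Writing each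
digit `z` as `(1 - sgn z) / 2`, both `1 - x` and `1 - y` become a constant `(1 + 2⁻ⁿ) / 2` plus a
linear combination of the signs of the digits.  After expanding the product, a term is a sum of
`sgn (ℓ t)` over all `t` for some linear form `ℓ`, and vanishes whenever flipping a suitable digit
of `t` changes `ℓ t` (`sum_eq_zero_of_flip`).  The surviving correlations `t_k`, `b_k` are those with
`b_k = t_k`, that is `a_k = 0` or `k = n` (`sum_sgn_mul_sgn`); each contributes `1 / 2 ^ (n + 3)`.
Altogether `∫ Δ = (h + 5) / 2 ^ (n + 3) + 1 / 2 ^ (2 n + 2)` (`sum_one_sub_mul_one_sub`).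
-/

open Finset

def bvec (n : ℕ) (a : Fin (n-1) → ZMod 2) (t : Fin n → ZMod 2) (k : Fin n) : ZMod 2 :=
  t k + (if h : (k : ℕ) < n - 1 then a ⟨k, h⟩ else 0) *
    ∑ i ∈ Finset.univ.filter (fun i : Fin n => k < i), t i

noncomputable def xcoord (n : ℕ) (t : Fin n → ZMod 2) : ℝ :=
  ∑ k : Fin n, ((t k).val : ℝ) / 2 ^ (n - (k : ℕ))

noncomputable def ycoord (n : ℕ) (a : Fin (n-1) → ZMod 2) (t : Fin n → ZMod 2) : ℝ :=
  ∑ k : Fin n, ((bvec n a t k).val : ℝ) / 2 ^ ((k : ℕ) + 1)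

open MeasureTheory

/-! ### Character sums over the digit vectors -/

/-- The nontrivial character `z ↦ (-1)^z` of `ZMod 2`, with real values. -/
def sgn (z : ZMod 2) : ℝ := 1 - 2 * (z.val : ℝ)

lemma sgn_add_one (z : ZMod 2) : sgn (z + 1) = -sgn z := by
  fin_cases z
  · change sgn 1 = -sgn 0
    simp [sgn, ZMod.val_one]; norm_num
  · change sgn 0 = -sgn 1
    simp [sgn, ZMod.val_one]; norm_num

lemma sgn_mul_self (z : ZMod 2) : sgn z * sgn z = 1 := by
  fin_cases z
  · change sgn 0 * sgn 0 = 1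
    simp [sgn]
  · change sgn 1 * sgn 1 = 1
    simp [sgn, ZMod.val_one]; norm_num

lemma val_eq_sgn (z : ZMod 2) : (z.val : ℝ) = (1 - sgn z) / 2 := by
  unfold sgn; ring

/-- If flipping the digit `t_j` negates `F`, then `F` sums to zero over all digit vectors. -/
lemma sum_eq_zero_of_flip {n : ℕ} (j : Fin n) (F : (Fin n → ZMod 2) → ℝ)
    (hF : ∀ t, F (t + Pi.single j 1) = -F t) : ∑ t, F t = 0 := by
  have h := Equiv.sum_comp (Equiv.addRight (Pi.single j (1 : ZMod 2))) F
  simp only [Equiv.coe_addRight, hF, sum_neg_distrib] at h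
  linarith

lemma bvec_flip_self {n : ℕ} (a : Fin (n-1) → ZMod 2) (t : Fin n → ZMod 2) (k : Fin n) :
    bvec n a (t + Pi.single k 1) k = bvec n a t k + 1 := by
  have : ∑ i ∈ univ.filter (fun i : Fin n => k < i), (t + Pi.single k (1 : ZMod 2) : Fin n → ZMod 2) i
      = ∑ i ∈ univ.filter (fun i : Fin n => k < i), t i := by
    refine sum_congr rfl fun i hi => ?_
    simp [(mem_filter.1 hi).2.ne']
  rw [bvec, bvec, this]
  simp only [Pi.add_apply, Pi.single_eq_same]
  ring

/-- When `a_k = 1`, flipping a later digit flips `b_k`. -/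
lemma bvec_flip_later {n : ℕ} (a : Fin (n-1) → ZMod 2) (t : Fin n → ZMod 2) {k l : Fin n}
    (hk : (k : ℕ) < n - 1) (hak : a ⟨k, hk⟩ = 1) (hkl : k < l) :
    bvec n a (t + Pi.single l 1) k = bvec n a t k + 1 := by
  have : ∑ i ∈ univ.filter (fun i : Fin n => k < i), (t + Pi.single l (1 : ZMod 2) : Fin n → ZMod 2) i
      = ∑ i ∈ univ.filter (fun i : Fin n => k < i), t i + 1 := by
    simp [sum_add_distrib, Pi.single_apply, hkl]
  rw [bvec, bvec, this]
  simp only [Pi.add_apply, Pi.single_eq_of_ne hkl.ne, dif_pos hk, hak]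
  ring

/-- The indices `k` with `b_k = t_k` identically: those with `a_k = 0`, and the last one. -/
def IsDiag (n : ℕ) (a : Fin (n-1) → ZMod 2) (k : Fin n) : Prop :=
  ∀ h : (k : ℕ) < n - 1, a ⟨k, h⟩ = 0

instance (n : ℕ) (a : Fin (n-1) → ZMod 2) : DecidablePred (IsDiag n a) :=
  fun _ => inferInstanceAs (Decidable (∀ _, _))

lemma bvec_of_isDiag {n : ℕ} {a : Fin (n-1) → ZMod 2} {k : Fin n} (h : IsDiag n a k)
    (t : Fin n → ZMod 2) : bvec n a t k = t k := by
  unfold bvec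
  split_ifs with hk
  · simp [h hk]
  · simp

lemma sum_sgn_digit {n : ℕ} (j : Fin n) : ∑ t : Fin n → ZMod 2, sgn (t j) = 0 :=
  sum_eq_zero_of_flip j _ fun t => by simp [sgn_add_one]

lemma sum_sgn_bvec {n : ℕ} (a : Fin (n-1) → ZMod 2) (k : Fin n) :
    ∑ t : Fin n → ZMod 2, sgn (bvec n a t k) = 0 :=
  sum_eq_zero_of_flip k _ fun t => by rw [bvec_flip_self, sgn_add_one]

/-- Orthogonality of the digits of the two coordinates. -/
lemma sum_sgn_mul_sgn {n : ℕ} (a : Fin (n-1) → ZMod 2) (j k : Fin n) :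
    ∑ t : Fin n → ZMod 2, sgn (t j) * sgn (bvec n a t k)
      = if j = k then (if IsDiag n a k then 2 ^ n else 0) else 0 := by
  split_ifs with hjk hd
  · subst hjk
    simp [bvec_of_isDiag hd, sgn_mul_self]
  · subst hjk
    simp only [IsDiag, not_forall] at hd
    obtain ⟨hk, hak⟩ := hd
    have hak1 : a ⟨j, hk⟩ = 1 := by
      generalize a ⟨j, hk⟩ = z at hak
      revert z; decide
    -- the last digit occurs in `b_j` but is not `t_j`
    have hjl : j < ⟨n - 1, by omega⟩ := Fin.lt_def.2 hk
    refine sum_eq_zero_of_flip ⟨n - 1, by omega⟩ _ fun t => ?_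
    rw [bvec_flip_later a t hk hak1 hjl, sgn_add_one, Pi.add_apply,
      Pi.single_eq_of_ne hjl.ne, add_zero]
    ring
  · refine sum_eq_zero_of_flip k _ fun t => ?_
    rw [bvec_flip_self, sgn_add_one, Pi.add_apply, Pi.single_eq_of_ne hjk, add_zero]
    ring

/-! ### The sum over the points of the net -/

lemma sum_yweight (n : ℕ) : ∑ k : Fin n, (1 : ℝ) / 2 ^ ((k : ℕ) + 1) = 1 - 1 / 2 ^ n := by
  rw [Fin.sum_univ_eq_sum_range (fun k => (1 : ℝ) / 2 ^ (k + 1))]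
  induction n with
  | zero => simp
  | succ n ih => rw [sum_range_succ, ih]; field_simp; ring

lemma sum_xweight (n : ℕ) : ∑ k : Fin n, (1 : ℝ) / 2 ^ (n - (k : ℕ)) = 1 - 1 / 2 ^ n := by
  rw [← sum_yweight, ← Equiv.sum_comp Fin.revPerm]
  refine sum_congr rfl fun k _ => ?_
  have : n - (Fin.revPerm k : ℕ) = k + 1 := by
    simp [Fin.val_rev]; omega
  rw [this]

lemma val_le_one (z : ZMod 2) : (z.val : ℝ) ≤ 1 := by
  have := ZMod.val_lt z
  exact_mod_cast Nat.lt_succ_iff.1 this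

lemma xcoord_mem (n : ℕ) (t : Fin n → ZMod 2) : 0 ≤ xcoord n t ∧ xcoord n t ≤ 1 := by
  refine ⟨sum_nonneg fun _ _ => by positivity, ?_⟩
  calc xcoord n t ≤ ∑ k : Fin n, (1 : ℝ) / 2 ^ (n - (k : ℕ)) :=
        sum_le_sum fun k _ => by gcongr; exact val_le_one _
    _ ≤ 1 := by rw [sum_xweight]; linarith [show (0 : ℝ) ≤ 1 / 2 ^ n by positivity]

lemma ycoord_mem (n : ℕ) (a : Fin (n-1) → ZMod 2) (t : Fin n → ZMod 2) :
    0 ≤ ycoord n a t ∧ ycoord n a t ≤ 1 := by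
  refine ⟨sum_nonneg fun _ _ => by positivity, ?_⟩
  calc ycoord n a t ≤ ∑ k : Fin n, (1 : ℝ) / 2 ^ ((k : ℕ) + 1) :=
        sum_le_sum fun k _ => by gcongr; exact val_le_one _
    _ ≤ 1 := by rw [sum_yweight]; linarith [show (0 : ℝ) ≤ 1 / 2 ^ n by positivity]

lemma one_sub_xcoord (n : ℕ) (t : Fin n → ZMod 2) :
    1 - xcoord n t
      = (1 + 1 / 2 ^ n) / 2 + ∑ k : Fin n, 1 / 2 ^ (n - (k : ℕ)) / 2 * sgn (t k) := by
  have h : xcoord n t = (∑ k : Fin n, (1 : ℝ) / 2 ^ (n - (k : ℕ))) / 2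
      - ∑ k : Fin n, 1 / 2 ^ (n - (k : ℕ)) / 2 * sgn (t k) := by
    rw [xcoord, sum_div, ← sum_sub_distrib]
    exact sum_congr rfl fun k _ => by rw [val_eq_sgn]; ring
  rw [h, sum_xweight]; ring

lemma one_sub_ycoord (n : ℕ) (a : Fin (n-1) → ZMod 2) (t : Fin n → ZMod 2) :
    1 - ycoord n a t
      = (1 + 1 / 2 ^ n) / 2 + ∑ k : Fin n, 1 / 2 ^ ((k : ℕ) + 1) / 2 * sgn (bvec n a t k) := by
  have h : ycoord n a t = (∑ k : Fin n, (1 : ℝ) / 2 ^ ((k : ℕ) + 1)) / 2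
      - ∑ k : Fin n, 1 / 2 ^ ((k : ℕ) + 1) / 2 * sgn (bvec n a t k) := by
    rw [ycoord, sum_div, ← sum_sub_distrib]
    exact sum_congr rfl fun k _ => by rw [val_eq_sgn]; ring
  rw [h, sum_yweight]; ring

lemma card_isDiag (n : ℕ) (hn : 1 ≤ n) (a : Fin (n-1) → ZMod 2) :
    (univ.filter (IsDiag n a)).card = (univ.filter (fun i : Fin (n-1) => a i = 0)).card + 1 := by
  obtain ⟨m, rfl⟩ : ∃ m, n = m + 1 := ⟨n - 1, by omega⟩
  rw [card_filter, card_filter, Fin.sum_univ_castSucc]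
  congr 1
  · refine sum_congr rfl fun i _ => ?_
    have : IsDiag (m + 1) a i.castSucc ↔ a i = 0 := ⟨fun h => h i.2, fun h _ => h⟩
    simp only [this]
  · rw [if_pos]
    intro h
    simp at h

lemma sum_one_sub_mul_one_sub (n : ℕ) (hn : 1 ≤ n) (a : Fin (n-1) → ZMod 2) :
    (∑ t : Fin n → ZMod 2, (1 - xcoord n t) * (1 - ycoord n a t)) / 2 ^ n - 1 / 4
      = (((univ.filter (fun i : Fin (n-1) => a i = 0)).card : ℝ) + 5) / 2 ^ (n + 3)
        + 1 / 2 ^ (2 * n + 2) := by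
  have hX : ∑ t : Fin n → ZMod 2, ∑ k : Fin n, 1 / 2 ^ (n - (k : ℕ)) / 2 * sgn (t k) = 0 := by
    rw [sum_comm]
    simp [← mul_sum, sum_sgn_digit]
  have hY : ∑ t : Fin n → ZMod 2, ∑ k : Fin n, 1 / 2 ^ ((k : ℕ) + 1) / 2 * sgn (bvec n a t k)
      = 0 := by
    rw [sum_comm]
    simp [← mul_sum, sum_sgn_bvec]
  have hXY : ∑ t : Fin n → ZMod 2, (∑ j : Fin n, 1 / 2 ^ (n - (j : ℕ)) / 2 * sgn (t j)) *
      (∑ k : Fin n, 1 / 2 ^ ((k : ℕ) + 1) / 2 * sgn (bvec n a t k))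
      = (((univ.filter (fun i : Fin (n-1) => a i = 0)).card : ℝ) + 1) / 8 := by
    calc _ = ∑ j : Fin n, ∑ k : Fin n, 1 / 2 ^ (n - (j : ℕ)) / 2 * (1 / 2 ^ ((k : ℕ) + 1) / 2) *
          ∑ t : Fin n → ZMod 2, sgn (t j) * sgn (bvec n a t k) := by
          simp only [sum_mul_sum]
          rw [sum_comm]
          refine sum_congr rfl fun j _ => ?_
          rw [sum_comm]
          simp only [mul_sum]
          exact sum_congr rfl fun k _ => sum_congr rfl fun t _ => by ring
      _ = ∑ j : Fin n, if IsDiag n a j then (1 : ℝ) / 8 else 0 := by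
          refine sum_congr rfl fun j _ => ?_
          simp only [sum_sgn_mul_sgn, mul_ite, mul_zero, sum_ite_eq, mem_univ, if_true]
          refine if_congr Iff.rfl ?_ rfl
          -- the two weights of the digit `j` multiply to `2 ^ (-(n + 1))`, independently of `j`
          have h2 : (2 : ℝ) ^ n = 2 ^ (n - (j : ℕ)) * 2 ^ (j : ℕ) := by
            rw [← pow_add]; congr 1; omega
          rw [h2, pow_succ]
          field_simp
          norm_num
      _ = _ := by
          rw [← sum_filter, sum_const, card_isDiag n hn]
          simp; ring
  have key : ∑ t : Fin n → ZMod 2, (1 - xcoord n t) * (1 - ycoord n a t)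
      = 2 ^ n * ((1 + 1 / 2 ^ n) / 2) ^ 2
        + (((univ.filter (fun i : Fin (n-1) => a i = 0)).card : ℝ) + 1) / 8 := by
    simp only [one_sub_xcoord, one_sub_ycoord, add_mul, mul_add, sum_add_distrib,
      ← sum_mul, ← mul_sum, hX, hY, hXY]
    simp
    ring
  rw [key, pow_add, pow_add, pow_mul']
  field_simp
  ring

/-! ### The integral of the discrepancy function -/

/-- The discrepancy function `Δ` of the net, on `ℝ × ℝ`. -/
noncomputable def discrepancy (n : ℕ) (a : Fin (n-1) → ZMod 2) (z : ℝ × ℝ) : ℝ :=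
  ((univ.filter
    (fun t : Fin n → ZMod 2 => xcoord n t < z.1 ∧ ycoord n a t < z.2)).card : ℝ) / 2 ^ n - z.1 * z.2

/-- Lebesgue measure on the unit interval. -/
noncomputable abbrev unitMeasure : Measure ℝ := volume.restrict (Set.Ioc 0 1)

lemma discrepancy_eq (n : ℕ) (a : Fin (n-1) → ZMod 2) :
    discrepancy n a = fun z => (∑ t : Fin n → ZMod 2, (Set.Ioi (xcoord n t)).indicator 1 z.1 *
      (Set.Ioi (ycoord n a t)).indicator 1 z.2) / 2 ^ n - z.1 * z.2 := by
  funext z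
  rw [discrepancy, card_filter]
  push_cast
  congr 2
  refine sum_congr rfl fun t _ => ?_
  by_cases h1 : xcoord n t < z.1 <;> by_cases h2 : ycoord n a t < z.2 <;>
    simp [Set.indicator, h1, h2]

lemma integrable_indicator_Ioi (x : ℝ) :
    Integrable ((Set.Ioi x).indicator (1 : ℝ → ℝ)) unitMeasure :=
  (integrable_const (1 : ℝ)).indicator measurableSet_Ioi

lemma integral_indicator_Ioi {x : ℝ} (h0 : 0 ≤ x) (h1 : x ≤ 1) :
    ∫ s, (Set.Ioi x).indicator (1 : ℝ → ℝ) s ∂unitMeasure = 1 - x := by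
  rw [integral_indicator_one measurableSet_Ioi, measureReal_restrict_apply measurableSet_Ioi,
    Set.inter_comm, Set.Ioc_inter_Ioi, sup_eq_right.2 h0, Real.volume_real_Ioc_of_le h1]

lemma integrable_id_unit : Integrable (fun s : ℝ => s) unitMeasure :=
  (intervalIntegrable_iff_integrableOn_Ioc_of_le zero_le_one).1 intervalIntegral.intervalIntegrable_id

lemma integral_id_unit : ∫ s : ℝ, s ∂unitMeasure = 1 / 2 := by
  rw [← intervalIntegral.integral_of_le zero_le_one, integral_id]; norm_num

lemma integrable_sum_indicator (n : ℕ) (a : Fin (n-1) → ZMod 2) :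
    Integrable (fun z : ℝ × ℝ => (∑ t : Fin n → ZMod 2,
      (Set.Ioi (xcoord n t)).indicator (1 : ℝ → ℝ) z.1 *
      (Set.Ioi (ycoord n a t)).indicator (1 : ℝ → ℝ) z.2) / 2 ^ n)
      (unitMeasure.prod unitMeasure) :=
  (integrable_finsetSum _ fun _ _ =>
    (integrable_indicator_Ioi _).mul_prod (integrable_indicator_Ioi _)).div_const _

lemma integrable_discrepancy (n : ℕ) (a : Fin (n-1) → ZMod 2) :
    Integrable (discrepancy n a) (unitMeasure.prod unitMeasure) := by
  rw [discrepancy_eq]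
  exact (integrable_sum_indicator n a).sub (integrable_id_unit.mul_prod integrable_id_unit)

lemma integral_discrepancy (n : ℕ) (a : Fin (n-1) → ZMod 2) :
    ∫ z, discrepancy n a z ∂(unitMeasure.prod unitMeasure)
      = (∑ t : Fin n → ZMod 2, (1 - xcoord n t) * (1 - ycoord n a t)) / 2 ^ n - 1 / 4 := by
  rw [discrepancy_eq, integral_sub (integrable_sum_indicator n a)
    (integrable_id_unit.mul_prod integrable_id_unit), integral_div, integral_finsetSum _
      fun _ _ => (integrable_indicator_Ioi _).mul_prod (integrable_indicator_Ioi _),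
    integral_prod_mul (fun s : ℝ => s) (fun s : ℝ => s), integral_id_unit]
  congr 1
  · congr 1
    refine sum_congr rfl fun t _ => ?_
    rw [integral_prod_mul, integral_indicator_Ioi (xcoord_mem n t).1 (xcoord_mem n t).2,
      integral_indicator_Ioi (ycoord_mem n a t).1 (ycoord_mem n a t).2]
  · norm_num

theorem stmt7 (n : ℕ) (hn : 1 ≤ n) (a : Fin (n-1) → ZMod 2) :
    (((Finset.univ.filter (fun i : Fin (n-1) => a i = 0)).card : ℝ) + 5) / 2 ^ (n + 3)
      ≤ ∫ t₁ in (0:ℝ)..1, ∫ t₂ in (0:ℝ)..1,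
          |((Finset.univ.filter
              (fun t : Fin n → ZMod 2 => xcoord n t < t₁ ∧ ycoord n a t < t₂)).card : ℝ) / 2 ^ n
            - t₁ * t₂| ∧
    ((Finset.univ.filter (fun i : Fin (n-1) => a i = 0)).card : ℝ) / 2 ^ (n + 3)
      ≤ ∫ t₁ in (0:ℝ)..1, ∫ t₂ in (0:ℝ)..1,
          |((Finset.univ.filter
              (fun t : Fin n → ZMod 2 => xcoord n t < t₁ ∧ ycoord n a t < t₂)).card : ℝ) / 2 ^ n
            - t₁ * t₂| := by
  have hI := integrable_discrepancy n a
  have hprod : ∫ t₁ in (0:ℝ)..1, ∫ t₂ in (0:ℝ)..1,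
          |((Finset.univ.filter
              (fun t : Fin n → ZMod 2 => xcoord n t < t₁ ∧ ycoord n a t < t₂)).card : ℝ) / 2 ^ n
            - t₁ * t₂|
      = ∫ z, |discrepancy n a z| ∂(unitMeasure.prod unitMeasure) := by
    rw [integral_prod _ hI.abs]
    simp only [intervalIntegral.integral_of_le zero_le_one]
    rfl
  have hle : ∫ z, discrepancy n a z ∂(unitMeasure.prod unitMeasure)
      ≤ ∫ z, |discrepancy n a z| ∂(unitMeasure.prod unitMeasure) :=
    integral_mono hI hI.abs fun z => le_abs_self _
  rw [integral_discrepancy, sum_one_sub_mul_one_sub n hn a] at hle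
  have hmain : (((Finset.univ.filter (fun i : Fin (n-1) => a i = 0)).card : ℝ) + 5) / 2 ^ (n + 3)
      ≤ ∫ z, |discrepancy n a z| ∂(unitMeasure.prod unitMeasure) :=
    le_trans (le_add_of_nonneg_right (by positivity)) hle
  rw [hprod]
  refine ⟨hmain, le_trans ?_ hmain⟩
  gcongr
  linarith
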